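/- Let F be a union-closed family on n elements with m sets. If H(F) ≤ 3, then there exists an element x ∈ {1, …, n} that belongs to more than m/2 of the sets of F. -/

import Mathlib

/-!
Height at most three forbids chains of four sets in `F`, so if `A ≠ B` are members whose union is
proper (some point is missed by it), then `A ∪ B` is a coatom of `F`, i.e. a maximal proper member.

Let `S` be a coatom, `x ∉ S` and `y ∈ S`. A member missing `x` lies in `S`, so two members missing
both `x` and `y` would have union `S ∋ y`: at most one member `B` misses both points. If `B` does
not exist, `x` and `y` together beat one half on average because some member contains both.
Otherwise pick `z ∈ B`. If a coatom `T` misses `z`, then `x, y ∈ T`, as `B ⊈ T`; hence `T` and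
`T ∪ B` contain both points, outnumbering `B`, and again `x` or `y` lies in more than half of the
members. If no coatom misses `z`, then at most one member does, while `B` and `B ∪ S` contain it.
-/

open Finset

/-- The minimal members of a family of finite sets: those `A` such that no
member `B ≠ A` satisfies `B ⊆ A`. -/
def minimalSets (G : Finset (Finset ℕ)) : Finset (Finset ℕ) :=
  G.filter fun A => ∀ B ∈ G, B ≠ A → ¬ B ⊆ A

/-- The family remaining after removing the first `i` layers of the height
decomposition. -/
def rest (F : Finset (Finset ℕ)) : ℕ → Finset (Finset ℕ)
  | 0 => F
  | i + 1 => rest F i \ minimalSets (rest F i)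

/-- The `i`-th layer `π_i` of the height decomposition (meaningful for `i ≥ 1`):
`π_{i+1}` is the family of minimal members of `F \ (π₁ ∪ ⋯ ∪ π_i)`. -/
def layer (F : Finset (Finset ℕ)) : ℕ → Finset (Finset ℕ)
  | 0 => ∅
  | i + 1 => minimalSets (rest F i)

/-- The height number `H(F)`: the least `H` with `F = π₁ ∪ ⋯ ∪ π_H`,
equivalently the least `H` with `rest F H = ∅`. -/
noncomputable def height (F : Finset (Finset ℕ)) : ℕ :=
  sInf {H : ℕ | rest F H = ∅}

/-- `F` is a union-closed family on `n` elements with `m` sets: a finite family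
of `m` distinct nonempty finite sets whose union is `{1, …, n}`, closed under
unions. -/
def IsUC (F : Finset (Finset ℕ)) (n m : ℕ) : Prop :=
  F.Nonempty ∧ F.card = m ∧ (∀ A ∈ F, A.Nonempty) ∧
    F.sup id = Finset.Icc 1 n ∧ ∀ A ∈ F, ∀ B ∈ F, A ∪ B ∈ F

/-- The tent `T(A)` of a set `A` of level `i ≥ 2`: the family
`{A} ∪ {B ∈ π_{i−1} : B ⊆ A}`. -/
def tent (F : Finset (Finset ℕ)) (i : ℕ) (A : Finset ℕ) : Finset (Finset ℕ) :=
  insert A ((layer F (i - 1)).filter fun B => B ⊆ A)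

/-- `F` is separating: every pair of distinct elements of `{1, …, n}` is
separated by some member of `F`. -/
def Separating (F : Finset (Finset ℕ)) (n : ℕ) : Prop :=
  ∀ x ∈ Finset.Icc 1 n, ∀ y ∈ Finset.Icc 1 n, x ≠ y →
    ∃ A ∈ F, (x ∈ A ∧ y ∉ A) ∨ (y ∈ A ∧ x ∉ A)

section HeightDecomposition

variable {F : Finset (Finset ℕ)}

theorem mem_rest_succ_iff_exists_ssubset {i : ℕ} {A : Finset ℕ} :
    A ∈ rest F (i + 1) ↔ A ∈ rest F i ∧ ∃ B ∈ rest F i, B ⊂ A := by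
  simp only [rest, minimalSets, mem_sdiff, mem_filter, not_and, not_forall, not_not,
    exists_prop, ssubset_iff_subset_ne]
  grind

theorem mem_rest_of_subset {i : ℕ} {A B : Finset ℕ} (hA : A ∈ rest F i) (hB : B ∈ F)
    (hAB : A ⊆ B) : B ∈ rest F i := by
  induction i generalizing A B with
  | zero => exact hB
  | succ i ih =>
    obtain ⟨hA, C, hC, hCA⟩ := mem_rest_succ_iff_exists_ssubset.1 hA
    exact mem_rest_succ_iff_exists_ssubset.2 ⟨ih hA hB hAB, C, hC, hCA.trans_subset hAB⟩

theorem mem_rest_succ_of_ssubset {i : ℕ} {A B : Finset ℕ} (hA : A ∈ rest F i) (hB : B ∈ F)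
    (hAB : A ⊂ B) : B ∈ rest F (i + 1) :=
  mem_rest_succ_iff_exists_ssubset.2 ⟨mem_rest_of_subset hA hB hAB.subset, A, hA, hAB⟩

theorem le_card_of_mem_rest {i : ℕ} {A : Finset ℕ} (hA : A ∈ rest F i) : i ≤ #A := by
  induction i generalizing A with
  | zero => exact Nat.zero_le _
  | succ i ih =>
    obtain ⟨-, B, hB, hBA⟩ := mem_rest_succ_iff_exists_ssubset.1 hA
    exact (ih hB).trans_lt (card_lt_card hBA)

theorem rest_antitone (F : Finset (Finset ℕ)) : Antitone (rest F) :=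
  antitone_nat_of_succ_le fun _ ↦ sdiff_subset

theorem rest_height (F : Finset (Finset ℕ)) : rest F (height F) = ∅ := by
  refine Nat.sInf_mem (s := {H | rest F H = ∅}) ⟨F.sup card + 1, eq_empty_of_forall_notMem ?_⟩
  intro A hA
  have hAF : A ∈ F := rest_antitone F (Nat.zero_le _) hA
  exact (le_card_of_mem_rest hA).not_gt (Nat.lt_succ_of_le (le_sup (f := card) hAF))

theorem mem_rest_of_ltSeries (p : LTSeries F) (i : Fin (p.length + 1)) :
    (p i : Finset ℕ) ∈ rest F i := by
  induction i using Fin.induction with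
  | zero => exact (p 0).2
  | succ i ih => exact mem_rest_succ_of_ssubset ih (p i.succ).2 (p.step i)

theorem krullDim_lt_height (F : Finset (Finset ℕ)) : Order.krullDim F < height F := by
  refine Order.krullDim_lt_coe_iff.2 fun p ↦ lt_of_not_ge fun hp ↦ ?_
  have hlast := rest_antitone F hp (mem_rest_of_ltSeries p (Fin.last _))
  simp [rest_height] at hlast

end HeightDecomposition

section Coatoms

section Preorder

variable {β : Type*} [Preorder β] {s : Set β} {a b c d : β}

/-- `c` is a coatom of `s`: a maximal element among the members of `s` that are not the greatest
element of `s`. Properness is encoded as failing to be an upper bound, so that `s` need not be known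
to have a greatest element. -/
def IsCoatomIn (s : Set β) (c : β) : Prop :=
  Maximal (fun b ↦ b ∈ s ∧ b ∉ upperBounds s) c

theorem IsCoatomIn.mem (hc : IsCoatomIn s c) : c ∈ s :=
  hc.prop.1

theorem IsCoatomIn.notMem_upperBounds (hc : IsCoatomIn s c) : c ∉ upperBounds s :=
  hc.prop.2

theorem exists_isCoatomIn (hfin : s.Finite) (ha : a ∈ s) (ha_ub : a ∉ upperBounds s) :
    ∃ c, IsCoatomIn s c :=
  (hfin.subset fun _ hb ↦ hb.1).exists_maximal (s := {b | b ∈ s ∧ b ∉ upperBounds s})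
    ⟨a, ha, ha_ub⟩

theorem not_lt_of_krullDim_lt_three (hdim : Order.krullDim s < 3) (ha : a ∈ s)
    (hb : b ∈ s) (hc : c ∈ s) (hd : d ∈ s) (hab : a < b) (hbc : b < c) : ¬c < d := by
  intro hcd
  let p : LTSeries s := RelSeries.fromListIsChain [⟨a, ha⟩, ⟨b, hb⟩, ⟨c, hc⟩, ⟨d, hd⟩]
    (List.cons_ne_nil _ _) (by simp [hab, hbc, hcd])
  exact (Order.krullDim_lt_coe_iff (n := 3).1 hdim p).false

end Preorder

section SemilatticeSup

variable {β : Type*} [SemilatticeSup β] {s : Set β} {a b c : β}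

theorem IsCoatomIn.le_of_sup_notMem_upperBounds (hs : SupClosed s) (hc : IsCoatomIn s c)
    (ha : a ∈ s) (hac : a ⊔ c ∉ upperBounds s) : a ≤ c :=
  le_sup_left.trans (hc.le_of_ge ⟨hs ha hc.mem, hac⟩ le_sup_right)

theorem isCoatomIn_sup_of_krullDim_lt_three (hs : SupClosed s) (hdim : Order.krullDim s < 3)
    (ha : a ∈ s) (hb : b ∈ s) (hab : a ≠ b) (hsup : a ⊔ b ∉ upperBounds s) :
    IsCoatomIn s (a ⊔ b) := by
  refine ⟨⟨hs ha hb, hsup⟩, fun c ⟨hc, hc_ub⟩ hle ↦ ?_⟩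
  by_contra hnle
  obtain ⟨d, hd, hdc⟩ : ∃ d ∈ s, ¬d ≤ c := by simpa [upperBounds] using hc_ub
  have hlt : a ⊔ b < c := lt_of_le_not_ge hle hnle
  have hcd : c < c ⊔ d := left_lt_sup.2 hdc
  rcases le_sup_left.lt_or_eq (a := a) (b := a ⊔ b) with h | h
  · exact not_lt_of_krullDim_lt_three hdim ha (hs ha hb) hc (hs hc hd) h hlt hcd
  · have hba : b < a := (left_eq_sup.1 h).lt_of_ne hab.symm
    exact not_lt_of_krullDim_lt_three hdim hb ha hc (hs hc hd) hba (h ▸ hlt) hcd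

end SemilatticeSup

end Coatoms

theorem card_lt_two_mul_card_filter_or {ι : Type*} (s : Finset ι) (p q : ι → Prop)
    [DecidablePred p] [DecidablePred q] (h : #{i ∈ s | ¬p i ∧ ¬q i} < #{i ∈ s | p i ∧ q i}) :
    #s < 2 * #{i ∈ s | p i} ∨ #s < 2 * #{i ∈ s | q i} := by
  classical
  have h_incl_excl := card_union_add_card_inter {i ∈ s | p i} {i ∈ s | q i}
  rw [← filter_or, ← filter_and] at h_incl_excl
  have h_compl := card_filter_add_card_filter_not (s := s) (fun i ↦ p i ∨ q i)
  simp only [not_or] at h_compl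
  omega

section Families

variable {α : Type*} [DecidableEq α] {F : Finset (Finset α)} {A B S T : Finset α} {x y z : α}

theorem notMem_upperBounds_of_notMem (hx : x ∈ F.sup id) (hxA : x ∉ A) :
    A ∉ upperBounds (F : Set (Finset α)) := by
  obtain ⟨C, hC, hxC⟩ := mem_sup.1 hx
  exact fun hA ↦ hxA (hA hC hxC)

theorem IsCoatomIn.exists_notMem (hS : IsCoatomIn (F : Set (Finset α)) S) :
    ∃ x ∈ F.sup id, x ∉ S := by
  by_contra! h
  exact hS.notMem_upperBounds fun A hA x hx ↦ h x (mem_sup.2 ⟨A, hA, hx⟩)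

theorem IsCoatomIn.subset_of_notMem (hF : SupClosed (F : Set (Finset α)))
    (hS : IsCoatomIn (F : Set (Finset α)) S) (hA : A ∈ F) (hx : x ∈ F.sup id) (hxS : x ∉ S)
    (hxA : x ∉ A) : A ⊆ S :=
  hS.le_of_sup_notMem_upperBounds hF hA (notMem_upperBounds_of_notMem hx (by simp [hxA, hxS]))

theorem IsCoatomIn.eq_of_notMem (hF : SupClosed (F : Set (Finset α)))
    (hS : IsCoatomIn (F : Set (Finset α)) S) (hT : IsCoatomIn (F : Set (Finset α)) T)
    (hx : x ∈ F.sup id) (hxS : x ∉ S) (hxT : x ∉ T) : S = T :=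
  (hT.subset_of_notMem hF hS.mem hx hxT hxS).antisymm (hS.subset_of_notMem hF hT.mem hx hxS hxT)

theorem card_filter_disjoint_le_one (hF : SupClosed (F : Set (Finset α)))
    (hdim : Order.krullDim F < 3) {X : Finset α} (hx : x ∈ F.sup id) (hxX : x ∈ X)
    (hX : ∀ S, IsCoatomIn (F : Set (Finset α)) S → ¬Disjoint X S) :
    #{A ∈ F | Disjoint X A} ≤ 1 := by
  simp only [card_le_one, mem_filter]
  rintro A ⟨hA, hXA⟩ B ⟨hB, hXB⟩
  by_contra hAB
  have hXAB : Disjoint X (A ∪ B) := disjoint_union_right.2 ⟨hXA, hXB⟩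
  exact hX _ (isCoatomIn_sup_of_krullDim_lt_three hF hdim hA hB hAB
    (notMem_upperBounds_of_notMem hx (disjoint_left.1 hXAB hxX))) hXAB

theorem card_lt_two_mul_card_filter_mem_of_forall_isCoatomIn (hF : SupClosed (F : Set (Finset α)))
    (hdim : Order.krullDim F < 3) (hcoatom : ∀ S, IsCoatomIn (F : Set (Finset α)) S → z ∈ S)
    (hcard : 1 < #{A ∈ F | z ∈ A}) : #F < 2 * #{A ∈ F | z ∈ A} := by
  obtain ⟨A, hA⟩ := card_pos.1 (zero_lt_one.trans hcard)
  have hz : z ∈ F.sup id := mem_sup.2 ⟨A, mem_filter.1 hA⟩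
  have hmiss : #{A ∈ F | z ∉ A} ≤ 1 := by
    simpa using
      card_filter_disjoint_le_one hF hdim hz (mem_singleton_self z) (by simpa using hcoatom)
  have hsplit := card_filter_add_card_filter_not (s := F) (z ∈ ·)
  omega

theorem IsCoatomIn.card_filter_notMem_and_notMem_le_one (hF : SupClosed (F : Set (Finset α)))
    (hdim : Order.krullDim F < 3) (hS : IsCoatomIn (F : Set (Finset α)) S) (hx : x ∈ F.sup id)
    (hxS : x ∉ S) (hyS : y ∈ S) : #{A ∈ F | x ∉ A ∧ y ∉ A} ≤ 1 := by
  have hcoatom : ∀ T, IsCoatomIn (F : Set (Finset α)) T → ¬Disjoint {x, y} T := by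
    simp only [disjoint_insert_left, disjoint_singleton_left]
    rintro T hT ⟨hxT, hyT⟩
    exact hyT (hS.eq_of_notMem hF hT hx hxS hxT ▸ hyS)
  simpa using card_filter_disjoint_le_one hF hdim hx (mem_insert_self x {y}) hcoatom

theorem one_lt_card_filter_of_not_subset (hF : SupClosed (F : Set (Finset α)))
    {p : Finset α → Prop} [DecidablePred p] (hp : Monotone p) (hA : A ∈ F) (hB : B ∈ F)
    (hpA : p A) (hBA : ¬B ⊆ A) : 1 < #{C ∈ F | p C} :=
  one_lt_card.2 ⟨A, mem_filter.2 ⟨hA, hpA⟩,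
    A ∪ B, mem_filter.2 ⟨hF hA hB, hp subset_union_left hpA⟩, (left_lt_sup.2 hBA).ne⟩

theorem IsCoatomIn.one_lt_card_filter_mem_and_mem (hF : SupClosed (F : Set (Finset α)))
    (hT : IsCoatomIn (F : Set (Finset α)) T) (hB : B ∈ F) (hBT : ¬B ⊆ T) (hx : x ∈ F.sup id)
    (hy : y ∈ F.sup id) (hxB : x ∉ B) (hyB : y ∉ B) : 1 < #{A ∈ F | x ∈ A ∧ y ∈ A} := by
  have hxT : x ∈ T := by_contra fun h ↦ hBT (hT.subset_of_notMem hF hB hx h hxB)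
  have hyT : y ∈ T := by_contra fun h ↦ hBT (hT.subset_of_notMem hF hB hy h hyB)
  exact one_lt_card_filter_of_not_subset hF (fun _ _ h ↦ And.imp (@h x) (@h y)) hT.mem hB
    ⟨hxT, hyT⟩ hBT

theorem exists_card_lt_two_mul_card_filter_of_isCoatomIn (hmem : ∀ A ∈ F, A.Nonempty)
    (hF : SupClosed (F : Set (Finset α))) (hdim : Order.krullDim F < 3)
    (hS : IsCoatomIn (F : Set (Finset α)) S) :
    ∃ x ∈ F.sup id, #F < 2 * #{A ∈ F | x ∈ A} := by
  obtain ⟨x, hx, hxS⟩ := hS.exists_notMem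
  obtain ⟨y, hyS⟩ := hmem S hS.mem
  have hy : y ∈ F.sup id := mem_sup.2 ⟨S, hS.mem, hyS⟩
  have hneither : #{A ∈ F | x ∉ A ∧ y ∉ A} ≤ 1 :=
    hS.card_filter_notMem_and_notMem_le_one hF hdim hx hxS hyS
  suffices (∃ z ∈ F.sup id, #F < 2 * #{A ∈ F | z ∈ A}) ∨
      #{A ∈ F | x ∉ A ∧ y ∉ A} < #{A ∈ F | x ∈ A ∧ y ∈ A} by
    rcases this with h | h
    · exact h
    · exact (card_lt_two_mul_card_filter_or F (x ∈ ·) (y ∈ ·) h).elim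
        (fun h ↦ ⟨x, hx, h⟩) (fun h ↦ ⟨y, hy, h⟩)
  by_cases hB : ∃ B ∈ F, x ∉ B ∧ y ∉ B
  · obtain ⟨B, hB, hxB, hyB⟩ := hB
    obtain ⟨z, hzB⟩ := hmem B hB
    by_cases hcoatom : ∀ T, IsCoatomIn (F : Set (Finset α)) T → z ∈ T
    · have hhit : 1 < #{A ∈ F | z ∈ A} :=
        one_lt_card_filter_of_not_subset hF (fun _ _ h ↦ @h z) hB hS.mem hzB (fun h ↦ hyB (h hyS))
      exact .inl ⟨z, mem_sup.2 ⟨B, hB, hzB⟩,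
        card_lt_two_mul_card_filter_mem_of_forall_isCoatomIn hF hdim hcoatom hhit⟩
    · push Not at hcoatom
      obtain ⟨T, hT, hzT⟩ := hcoatom
      exact .inr <| hneither.trans_lt <|
        hT.one_lt_card_filter_mem_and_mem hF hB (fun h ↦ hzT (h hzB)) hx hy hxB hyB
  · obtain ⟨C, hC, hxC⟩ := mem_sup.1 hx
    rw [card_eq_zero.2 (filter_eq_empty_iff.2 fun A hA h ↦ hB ⟨A, hA, h⟩)]
    exact .inr (card_pos.2 ⟨C ∪ S, mem_filter.2
      ⟨hF hC hS.mem, mem_union_left _ hxC, mem_union_right _ hyS⟩⟩)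

theorem frankl_of_height_le_three_general (hne : F.Nonempty) (hmem : ∀ A ∈ F, A.Nonempty)
    (hF : SupClosed (F : Set (Finset α))) (hdim : Order.krullDim F < 3) :
    ∃ x ∈ F.sup id, #F < 2 * #{A ∈ F | x ∈ A} := by
  by_cases hproper : ∃ A ∈ F, A ∉ upperBounds (F : Set (Finset α))
  · obtain ⟨A, hA, hA_ub⟩ := hproper
    obtain ⟨S, hS⟩ := exists_isCoatomIn F.finite_toSet hA hA_ub
    exact exists_card_lt_two_mul_card_filter_of_isCoatomIn hmem hF hdim hS
  · push Not at hproper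
    obtain ⟨A, hA⟩ := hne
    obtain ⟨x, hxA⟩ := hmem A hA
    have hall : ∀ B ∈ F, x ∈ B := fun B hB ↦ hproper B hB hA hxA
    refine ⟨x, mem_sup.2 ⟨A, hA, hxA⟩, ?_⟩
    rw [filter_true_of_mem hall]
    have := card_pos.2 ⟨A, hA⟩
    omega

end Families

/-- If `H(F) ≤ 3`, then some element of `{1, …, n}` belongs to
more than `m/2` of the sets of `F`. -/
theorem frankl_of_height_le_three (n m : ℕ) (F : Finset (Finset ℕ))
    (hF : IsUC F n m) (h : height F ≤ 3) :
    ∃ x ∈ Finset.Icc 1 n, 2 * (F.filter fun A => x ∈ A).card > m := by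
  obtain ⟨hne, rfl, hmem, hsup, hunion⟩ := hF
  exact hsup ▸ frankl_of_height_le_three_general hne hmem (fun A hA B hB ↦ hunion A hA B hB)
    ((krullDim_lt_height F).trans_le (mod_cast h))
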